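/- arXiv:2511.12863 — 4 statements merged into one kernel-verified Lean document; each statement's English description precedes it below -/
import Mathlib

section
/- If z and z' are distinct elements of the same group D_t and their one-step marginal contributions coincide, i.e., v(S ∪ {z}) − v(S) = v(S ∪ {z'}) − v(S) for every S ⊆ D \ {z, z'}, then φ^σ(z; v, D) = φ^σ(z'; v, D). -/
open Finset

variable {α : Type*}

/-- Prefix union `U_t = D₁ ∪ ⋯ ∪ D_t` (groups are 0-indexed, so this is the union of
the groups with index `< t`). -/
def prefixUnion [DecidableEq α] (Dg : ℕ → Finset α) (t : ℕ) : Finset α :=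
  (Finset.range t).biUnion Dg

/-- Asymmetric Data Shapley value (subset form) of a source `z` belonging to group `Dg t`. -/
noncomputable def ADS [DecidableEq α] (Dg : ℕ → Finset α) (v : Finset α → ℝ) (t : ℕ)
    (z : α) : ℝ :=
  (1 / (Dg t).card) *
    ∑ S ∈ ((Dg t).erase z).powerset,
      ((((Dg t).card - 1).choose S.card : ℝ))⁻¹ *
        (v (prefixUnion Dg t ∪ S ∪ {z}) - v (prefixUnion Dg t ∪ S))

/-- No element of `Dg t` lies in the union of the earlier groups. -/
theorem notMem_prefixUnion [DecidableEq α] {T : ℕ} {Dg : ℕ → Finset α}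
    (hdisj : ∀ i < T, ∀ j < T, i ≠ j → Disjoint (Dg i) (Dg j))
    {t : ℕ} (ht : t < T) {x : α} (hx : x ∈ Dg t) : x ∉ prefixUnion Dg t := by
  simp only [prefixUnion, mem_biUnion, Finset.mem_range, not_exists, not_and]
  intro i hi hxi
  exact Finset.disjoint_left.mp (hdisj i (hi.trans ht) t ht hi.ne) hxi hx

/-- The sum defining `ADS`, split according to whether the coalition contains `y`. -/
theorem ADS_eq_sum_erase_erase [DecidableEq α] (Dg : ℕ → Finset α) (v : Finset α → ℝ) (t : ℕ)
    {x y : α} (hy : y ∈ Dg t) (hxy : x ≠ y) :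
    ADS Dg v t x = (1 / (Dg t).card) *
      ∑ S ∈ (((Dg t).erase x).erase y).powerset,
        (((((Dg t).card - 1).choose S.card : ℝ))⁻¹ *
            (v (prefixUnion Dg t ∪ S ∪ {x}) - v (prefixUnion Dg t ∪ S)) +
          ((((Dg t).card - 1).choose (S.card + 1) : ℝ))⁻¹ *
            (v (prefixUnion Dg t ∪ S ∪ {x, y}) - v (prefixUnion Dg t ∪ S ∪ {y}))) := by
  have hmem : y ∈ (Dg t).erase x := mem_erase.mpr ⟨hxy.symm, hy⟩
  rw [ADS]
  nth_rewrite 1 [← insert_erase hmem]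
  rw [sum_powerset_insert (notMem_erase y _), ← sum_add_distrib]
  congr 1
  refine sum_congr rfl fun S hS => ?_
  have hyS : y ∉ S := fun h => notMem_erase y _ (mem_powerset.mp hS h)
  have hxyUnion : prefixUnion Dg t ∪ insert y S ∪ {x} = prefixUnion Dg t ∪ S ∪ {x, y} := by
    ext; simp; tauto
  have hyUnion : prefixUnion Dg t ∪ insert y S = prefixUnion Dg t ∪ S ∪ {y} := by
    ext; simp
  rw [card_insert_of_notMem hyS, hxyUnion, hyUnion]

/-- If `z` and `z'` are distinct elements of the same group `D_t` whose one-step marginal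
contributions coincide on every `S ⊆ D \ {z, z'}`, then `φ^σ(z; v, D) = φ^σ(z'; v, D)`. -/
theorem ads_within_group_symmetry [DecidableEq α]
    (T : ℕ) (hT : 1 ≤ T) (Dg : ℕ → Finset α)
    (hdisj : ∀ i < T, ∀ j < T, i ≠ j → Disjoint (Dg i) (Dg j))
    (hne : ∀ j < T, (Dg j).Nonempty)
    (D : Finset α) (hD : D = (Finset.range T).biUnion Dg)
    (v : Finset α → ℝ)
    (t : ℕ) (ht : t < T)
    (z z' : α) (hz : z ∈ Dg t) (hz' : z' ∈ Dg t) (hzz' : z ≠ z')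
    (hdep : ∀ S ⊆ D \ {z, z'}, v (S ∪ {z}) - v S = v (S ∪ {z'}) - v S) :
    ADS Dg v t z = ADS Dg v t z' := by
  rw [ADS_eq_sum_erase_erase Dg v t hz' hzz', ADS_eq_sum_erase_erase Dg v t hz hzz'.symm,
    erase_right_comm, pair_comm z' z]
  congr 1
  refine sum_congr rfl fun S hS => ?_
  have hsub : prefixUnion Dg t ∪ S ⊆ D \ {z, z'} := by
    intro x hx
    simp only [mem_sdiff, mem_insert, mem_singleton, not_or]
    rcases mem_union.mp hx with hxU | hxS
    · refine ⟨?_, ?_, ?_⟩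
      · rw [hD]
        exact biUnion_subset_biUnion_of_subset_left Dg (range_subset_range.mpr ht.le) hxU
      · rintro rfl
        exact notMem_prefixUnion hdisj ht hz hxU
      · rintro rfl
        exact notMem_prefixUnion hdisj ht hz' hxU
    · have hxR := mem_powerset.mp hS hxS
      simp only [mem_erase] at hxR
      refine ⟨?_, ?_, ?_⟩
      · rw [hD]
        exact mem_biUnion.mpr ⟨t, Finset.mem_range.mpr ht, hxR.2.2⟩
      · tauto
      · tauto
  rw [sub_left_injective (hdep _ hsub)]
end

section
/- Fix t ∈ {1, …, T}, z ∈ D_t, and S_t ⊆ D_t \ {z}. The number of ordered permutations π ∈ R^σ(D) whose predecessor set of z equals U_{t−1} ∪ S_t is exactly (∏_{j=1}^{t−1} |D_j|!) · |S_t|! · (|D_t| − |S_t| − 1)! · (∏_{j=t+1}^{T} |D_j|!). -/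
open Finset

variable {α : Type*}

/-- A list `π` respects the ordered groups `σ = (D₁, …, D_T)` if it is the concatenation,
in group order, of a duplicate-free enumeration of each group. -/
def Respects [DecidableEq α] (Dg : ℕ → Finset α) (T : ℕ) (π : List α) : Prop :=
  ∃ Ls : Fin T → List α,
    (∀ j : Fin T, (Ls j).Nodup ∧ (Ls j).toFinset = Dg j.1) ∧
    π = (List.ofFn Ls).flatten

/-- `R^σ(D)`: the finite set of duplicate-free lists enumerating `D` that respect the
group order `σ`. -/
noncomputable def Rsigma [DecidableEq α] (Dg : ℕ → Finset α) (T : ℕ) (D : Finset α) :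
    Finset (List α) :=
  @Finset.filter _ (Respects Dg T) (Classical.decPred _) D.toList.permutations.toFinset

/-- `π^{<z}`: the finite set of elements strictly preceding `z` in the list `π`. -/
def predSet [DecidableEq α] (π : List α) (z : α) : Finset α :=
  (π.takeWhile (fun a => a ≠ z)).toFinset

/-- The duplicate-free enumerations of a finite set. -/
noncomputable def enumerations [DecidableEq α] (G : Finset α) : Finset (List α) :=
  G.toList.permutations.toFinset

lemma mem_enumerations [DecidableEq α] {G : Finset α} {l : List α} :
    l ∈ enumerations G ↔ l.Nodup ∧ l.toFinset = G := by
  rw [enumerations, List.mem_toFinset, List.mem_permutations]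
  constructor
  · intro h
    exact ⟨h.nodup_iff.2 G.nodup_toList, by rw [List.toFinset_eq_of_perm _ _ h, toList_toFinset]⟩
  · rintro ⟨hl, rfl⟩
    exact (List.toFinset_toList hl).symm

lemma length_of_mem_enumerations [DecidableEq α] {G : Finset α} {l : List α}
    (h : l ∈ enumerations G) : l.length = G.card := by
  rw [mem_enumerations] at h
  rw [← h.2, List.toFinset_card_of_nodup h.1]

lemma card_enumerations [DecidableEq α] (G : Finset α) :
    (enumerations G).card = G.card.factorial := by
  rw [enumerations, List.toFinset_card_of_nodup (List.nodup_permutations _ G.nodup_toList),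
    List.length_permutations, length_toList]

/-- Concatenations, in order, of one enumeration of each of the listed finite sets. -/
noncomputable def groupedEnumerations [DecidableEq α] : List (Finset α) → Finset (List α)
  | [] => {[]}
  | G :: Gs => image₂ (· ++ ·) (enumerations G) (groupedEnumerations Gs)

lemma mem_groupedEnumerations_cons [DecidableEq α] {G : Finset α} {Gs : List (Finset α)}
    {π : List α} : π ∈ groupedEnumerations (G :: Gs) ↔
      ∃ l ∈ enumerations G, ∃ q ∈ groupedEnumerations Gs, l ++ q = π := by
  simp [groupedEnumerations, mem_image₂]

lemma mem_groupedEnumerations_append [DecidableEq α] {As Bs : List (Finset α)}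
    {π : List α} : π ∈ groupedEnumerations (As ++ Bs) ↔
      ∃ p ∈ groupedEnumerations As, ∃ q ∈ groupedEnumerations Bs, p ++ q = π := by
  induction As generalizing π with
  | nil => simp [groupedEnumerations]
  | cons G As ih =>
    simp only [List.cons_append, mem_groupedEnumerations_cons, ih]
    constructor
    · rintro ⟨l, hl, _, ⟨p, hp, q, hq, rfl⟩, rfl⟩
      exact ⟨l ++ p, ⟨l, hl, p, hp, rfl⟩, q, hq, by simp⟩
    · rintro ⟨_, ⟨l, hl, p, hp, rfl⟩, q, hq, rfl⟩
      exact ⟨l, hl, p ++ q, ⟨p, hp, q, hq, rfl⟩, by simp⟩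

lemma card_groupedEnumerations [DecidableEq α] (Gs : List (Finset α)) :
    (groupedEnumerations Gs).card = (Gs.map fun G => G.card.factorial).prod := by
  induction Gs with
  | nil => simp [groupedEnumerations]
  | cons G Gs ih =>
    rw [groupedEnumerations, card_image₂_iff.2, ih, card_enumerations, List.map_cons,
      List.prod_cons]
    rintro ⟨l, q⟩ hl ⟨l', q'⟩ hl' h
    have hlen := (length_of_mem_enumerations (Set.mem_prod.1 hl).1).trans
      (length_of_mem_enumerations (Set.mem_prod.1 hl').1).symm
    exact Prod.ext_iff.2 (List.append_inj h hlen)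

lemma mem_iff_of_mem_groupedEnumerations [DecidableEq α] {Gs : List (Finset α)} {π : List α}
    (h : π ∈ groupedEnumerations Gs) (x : α) : x ∈ π ↔ ∃ G ∈ Gs, x ∈ G := by
  induction Gs generalizing π with
  | nil => simp_all [groupedEnumerations]
  | cons G Gs ih =>
    obtain ⟨l, hl, q, hq, rfl⟩ := mem_groupedEnumerations_cons.1 h
    rw [mem_enumerations] at hl
    simp [ih hq, ← hl.2]

lemma nodup_of_mem_groupedEnumerations [DecidableEq α] {Gs : List (Finset α)} {π : List α}
    (hGs : Gs.Pairwise Disjoint) (h : π ∈ groupedEnumerations Gs) : π.Nodup := by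
  induction Gs generalizing π with
  | nil => simp_all [groupedEnumerations]
  | cons G Gs ih =>
    obtain ⟨l, hl, q, hq, rfl⟩ := mem_groupedEnumerations_cons.1 h
    rw [List.pairwise_cons] at hGs
    rw [mem_enumerations] at hl
    refine hl.1.append (ih hGs.2 hq) fun x hxl hxq => ?_
    obtain ⟨G', hG', hx⟩ := (mem_iff_of_mem_groupedEnumerations hq x).1 hxq
    refine disjoint_left.1 (hGs.1 G' hG') ?_ hx
    rwa [← hl.2, List.mem_toFinset]

lemma respects_iff_mem_groupedEnumerations [DecidableEq α] (Dg : ℕ → Finset α) (T : ℕ)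
    (π : List α) : Respects Dg T π ↔ π ∈ groupedEnumerations ((List.range T).map Dg) := by
  induction T generalizing Dg π with
  | zero => simp [Respects, groupedEnumerations]
  | succ T ih =>
    rw [List.range_succ_eq_map, List.map_cons, List.map_map, mem_groupedEnumerations_cons]
    simp only [← ih, Respects, mem_enumerations]
    constructor
    · rintro ⟨Ls, hLs, rfl⟩
      exact ⟨Ls 0, hLs 0, _, ⟨fun j => Ls j.succ, fun j => hLs j.succ, rfl⟩, by simp⟩
    · rintro ⟨l, hl, _, ⟨Ls, hLs, rfl⟩, rfl⟩
      exact ⟨Fin.cons l Ls, Fin.cases hl hLs, by simp⟩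

lemma mem_Rsigma [DecidableEq α] {Dg : ℕ → Finset α} {T : ℕ}
    (hdisj : ∀ i < T, ∀ j < T, i ≠ j → Disjoint (Dg i) (Dg j)) {π : List α} :
    π ∈ Rsigma Dg T ((range T).biUnion Dg) ↔
      π ∈ groupedEnumerations ((List.range T).map Dg) := by
  rw [Rsigma, @mem_filter _ _ (Classical.decPred _), respects_iff_mem_groupedEnumerations]
  refine and_iff_right_of_imp fun h => mem_enumerations.2 ⟨?_, ?_⟩
  · refine nodup_of_mem_groupedEnumerations ?_ h
    rw [List.pairwise_map]
    refine List.nodup_range.pairwise_of_forall_ne fun i hi j hj hij => ?_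
    exact hdisj i (List.mem_range.1 hi) j (List.mem_range.1 hj) hij
  · ext x
    simp [mem_iff_of_mem_groupedEnumerations h]

lemma predSet_append_cons [DecidableEq α] {p q : List α} {z : α} (hp : z ∉ p) :
    predSet (p ++ z :: q) z = p.toFinset := by
  rw [predSet, List.takeWhile_append_of_pos]
  · simp
  · intro a ha
    simpa using fun h : a = z => hp (h ▸ ha)

/-- An enumeration of `G` in which the elements before `z` form `S` is an enumeration of `S`,
followed by `z`, followed by an enumeration of the remaining elements. -/
lemma append_cons_mem_enumerations_iff [DecidableEq α] {G S : Finset α} {z : α} (hz : z ∈ G)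
    (hS : S ⊆ G.erase z) {l r : List α} :
    (l ++ z :: r ∈ enumerations G ∧ l.toFinset = S) ↔
      l ∈ enumerations S ∧ r ∈ enumerations (G.erase z \ S) := by
  simp only [mem_enumerations, List.nodup_append', List.nodup_cons, List.disjoint_cons_right]
  constructor
  · rintro ⟨⟨⟨hl, ⟨hzr, hr⟩, hzl, hlr⟩, rfl⟩, rfl⟩
    refine ⟨⟨hl, rfl⟩, hr, ?_⟩
    ext x
    have := @hlr x
    by_cases hx : x = z
    · subst hx; simp [hzr]
    · simp [hx]; tauto
  · rintro ⟨⟨hl, rfl⟩, hr, hrG⟩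
    have key : ∀ x, x ∈ r ↔ (x ≠ z ∧ x ∈ G) ∧ x ∉ l := by
      intro x
      rw [← List.mem_toFinset, hrG]
      simp
    have hlG : ∀ x ∈ l, x ≠ z ∧ x ∈ G := fun x hx => by
      simpa using hS (List.mem_toFinset.2 hx)
    refine ⟨⟨⟨hl, ⟨fun h => ((key z).1 h).1.1 rfl, hr⟩, fun h => (hlG z h).1 rfl,
      fun x hx hxr => ((key x).1 hxr).2 hx⟩, ?_⟩, rfl⟩
    ext x
    have := hlG x
    by_cases hx : x = z
    · subst hx; simp [hz]
    · simp [hx, key]; tauto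

lemma toFinset_eq_prefixUnion [DecidableEq α] {Dg : ℕ → Finset α} {t : ℕ} {p : List α}
    (hp : p ∈ groupedEnumerations ((List.range t).map Dg)) :
    p.toFinset = prefixUnion Dg t := by
  ext x
  simp [prefixUnion, mem_iff_of_mem_groupedEnumerations hp]

lemma map_range_eq_append {β : Type*} (f : ℕ → β) {t T : ℕ} (ht : t < T) :
    (List.range T).map f =
      (List.range t).map f ++ f t :: (List.range' (t + 1) (T - (t + 1))).map f := by
  obtain ⟨k, rfl⟩ := Nat.exists_eq_add_of_lt ht
  rw [show t + k + 1 - (t + 1) = k by omega, List.range_eq_range',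
    show t + k + 1 = t + (k + 1) by omega, ← List.range'_append_1, List.range'_succ]
  simp [List.range_eq_range']

/-- Fixing the predecessor set of `z` amounts to splitting the group of `z` into three. -/
lemma filter_predSet_eq_groupedEnumerations [DecidableEq α] {Dg : ℕ → Finset α} {T : ℕ}
    (hdisj : ∀ i < T, ∀ j < T, i ≠ j → Disjoint (Dg i) (Dg j))
    {t : ℕ} (ht : t < T) {z : α} (hz : z ∈ Dg t)
    {St : Finset α} (hSt : St ⊆ (Dg t).erase z) :
    (Rsigma Dg T ((range T).biUnion Dg)).filter
        (fun π => predSet π z = prefixUnion Dg t ∪ St) =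
      groupedEnumerations ((List.range t).map Dg ++ St :: {z} :: ((Dg t).erase z \ St) ::
        (List.range' (t + 1) (T - (t + 1))).map Dg) := by
  have hU : Disjoint (prefixUnion Dg t) (Dg t) := by
    rw [prefixUnion, disjoint_biUnion_left]
    intro i hi
    have hi := mem_range.1 hi
    exact hdisj i (hi.trans ht) t ht hi.ne
  have hzU : z ∉ prefixUnion Dg t := fun h => disjoint_left.1 hU h hz
  have hpred : ∀ p ∈ groupedEnumerations ((List.range t).map Dg), ∀ l r q : List α, z ∉ l →
      predSet (p ++ (l ++ z :: r ++ q)) z = prefixUnion Dg t ∪ l.toFinset := by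
    intro p hp l r q hzl
    have hpU := toFinset_eq_prefixUnion hp
    rw [show p ++ (l ++ z :: r ++ q) = p ++ l ++ z :: (r ++ q) by simp, predSet_append_cons,
      List.toFinset_append, hpU]
    rw [List.mem_append, not_or]
    exact ⟨fun h => hzU (hpU ▸ List.mem_toFinset.2 h), hzl⟩
  have hsingle : ∀ l : List α, l ∈ enumerations {z} ↔ l = [z] := by
    intro l
    simp [enumerations]
  ext π
  rw [mem_filter, mem_Rsigma hdisj, map_range_eq_append Dg ht]
  simp only [mem_groupedEnumerations_append, mem_groupedEnumerations_cons]
  constructor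
  · rintro ⟨⟨p, hp, _, ⟨m, hm, q, hq, rfl⟩, rfl⟩, hπ⟩
    have hm' := mem_enumerations.1 hm
    obtain ⟨l, r, rfl⟩ := List.append_of_mem (List.mem_toFinset.1 (hm'.2 ▸ hz))
    have hzl : z ∉ l := fun h => (List.nodup_append'.1 hm'.1).2.2 h (by simp)
    rw [hpred p hp l r q hzl] at hπ
    have hlD : l.toFinset ⊆ Dg t := by
      rw [← hm'.2, List.toFinset_append]
      exact subset_union_left
    have hl : l.toFinset = St := by
      have hlU := hU.mono_right hlD
      have hSU := hU.mono_right (hSt.trans (erase_subset _ _))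
      rw [← union_sdiff_cancel_left hlU, hπ, union_sdiff_cancel_left hSU]
    obtain ⟨h₁, h₂⟩ := (append_cons_mem_enumerations_iff hz hSt).1 ⟨hm, hl⟩
    exact ⟨p, hp, _, ⟨l, h₁, _, ⟨[z], (hsingle _).2 rfl, _, ⟨r, h₂, q, hq, rfl⟩, rfl⟩, rfl⟩,
      by simp⟩
  · rintro ⟨p, hp, _, ⟨l, h₁, _, ⟨_, hs, _, ⟨r, h₂, q, hq, rfl⟩, rfl⟩, rfl⟩, rfl⟩
    obtain rfl := (hsingle _).1 hs
    obtain ⟨hm, hl⟩ := (append_cons_mem_enumerations_iff hz hSt).2 ⟨h₁, h₂⟩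
    have hzl : z ∉ l := fun h =>
      notMem_erase z (Dg t) (hSt (hl ▸ List.mem_toFinset.2 h))
    have heq : p ++ (l ++ ([z] ++ (r ++ q))) = p ++ (l ++ z :: r ++ q) := by simp
    rw [heq]
    exact ⟨⟨p, hp, _, ⟨_, hm, q, hq, rfl⟩, rfl⟩, by rw [hpred p hp l r q hzl, hl]⟩

/-- Counting ordered permutations whose predecessor set of `z ∈ D_t` equals
`U_{t-1} ∪ S_t`: there are exactly
`(∏_{j<t} |D_j|!) · |S_t|! · (|D_t| − |S_t| − 1)! · (∏_{j>t} |D_j|!)` of them. -/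
theorem ads_ordered_permutation_count [DecidableEq α]
    (T : ℕ) (hT : 1 ≤ T) (Dg : ℕ → Finset α)
    (hdisj : ∀ i < T, ∀ j < T, i ≠ j → Disjoint (Dg i) (Dg j))
    (hne : ∀ j < T, (Dg j).Nonempty)
    (D : Finset α) (hD : D = (Finset.range T).biUnion Dg)
    (t : ℕ) (ht : t < T) (z : α) (hz : z ∈ Dg t)
    (St : Finset α) (hSt : St ⊆ (Dg t).erase z) :
    ((Rsigma Dg T D).filter (fun π => predSet π z = prefixUnion Dg t ∪ St)).card =
      (∏ j ∈ Finset.range t, ((Dg j).card).factorial) * (St.card).factorial *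
        ((Dg t).card - St.card - 1).factorial *
        ∏ j ∈ Finset.Ico (t + 1) T, ((Dg j).card).factorial := by
  subst hD
  have hcard : ((Dg t).erase z \ St).card = (Dg t).card - St.card - 1 := by
    rw [card_sdiff_of_subset hSt, card_erase_of_mem hz]
    omega
  have hprefix : ((List.range t).map fun j => (Dg j).card.factorial).prod =
      ∏ j ∈ range t, (Dg j).card.factorial := rfl
  have hsuffix : ((List.range' (t + 1) (T - (t + 1))).map fun j => (Dg j).card.factorial).prod =
      ∏ j ∈ Ico (t + 1) T, (Dg j).card.factorial := rfl
  rw [filter_predSet_eq_groupedEnumerations hdisj ht hz hSt, card_groupedEnumerations]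
  simp only [List.map_append, List.map_cons, List.map_map, List.prod_append, List.prod_cons,
    Function.comp_def, hprefix, hsuffix, hcard, card_singleton, Nat.factorial_one, one_mul,
    mul_assoc]
end

section
/- (Total efficiency) The Asymmetric Data Shapley values sum to the total utility gain of the full training set: Σ_{z ∈ D} φ^σ(z; v, D) = v(D) − v(∅). -/
open Finset

variable {α : Type*}

/-- Sum over the pairs `z ∈ R ⊆ A`, parametrized by `z` and `R \ {z}`. -/
lemma sum_erase_powerset_insert [DecidableEq α] (A : Finset α) (c : ℕ → ℝ) (f : Finset α → ℝ) :
    ∑ z ∈ A, ∑ S ∈ (A.erase z).powerset, c S.card * f (insert z S) =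
      ∑ R ∈ A.powerset, R.card * c (R.card - 1) * f R := by
  have reindex : ∀ z ∈ A, ∑ S ∈ (A.erase z).powerset, c S.card * f (insert z S) =
      ∑ R ∈ A.powerset with z ∈ R, c (R.card - 1) * f R := by
    intro z hz
    refine Finset.sum_bij' (fun S _ => insert z S) (fun R _ => R.erase z) ?_ ?_ ?_ ?_ ?_
    · intro S hS
      simp only [mem_powerset, mem_filter] at hS ⊢
      exact ⟨insert_subset hz (hS.trans (erase_subset _ _)), mem_insert_self _ _⟩
    · intro R hR
      simp only [mem_powerset, mem_filter] at hR ⊢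
      exact erase_subset_erase _ hR.1
    · intro S hS
      exact erase_insert fun h => notMem_erase z A (mem_powerset.1 hS h)
    · intro R hR
      exact insert_erase (mem_filter.1 hR).2
    · intro S hS
      rw [card_insert_of_notMem fun h => notMem_erase z A (mem_powerset.1 hS h),
        Nat.add_sub_cancel]
  rw [sum_congr rfl reindex, sum_comm' (t' := A.powerset) (s' := fun R => R)]
  · simp [mul_assoc]
  · intro z R
    simp only [mem_filter, mem_powerset]
    exact ⟨fun h => ⟨h.2.2, h.2.1⟩, fun h => ⟨h.2 h.1, h.2, h.1⟩⟩

/-- Sum over the pairs `S ⊆ A`, `z ∈ A \ S`. -/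
lemma sum_erase_powerset [DecidableEq α] (A : Finset α) (g : Finset α → ℝ) :
    ∑ z ∈ A, ∑ S ∈ (A.erase z).powerset, g S =
      ∑ S ∈ A.powerset, ((A.card : ℝ) - S.card) * g S := by
  rw [sum_comm' (t' := A.powerset) (s' := fun S => A \ S)]
  · refine sum_congr rfl fun S hS => ?_
    rw [mem_powerset] at hS
    rw [sum_const, nsmul_eq_mul, cast_card_sdiff hS]
  · intro z S
    simp only [mem_powerset, mem_sdiff, subset_erase]
    tauto

lemma mul_inv_choose_pred {n k : ℕ} (hn : 0 < n) (hk : k ≤ n) :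
    (k : ℝ) * (((n - 1).choose (k - 1) : ℕ) : ℝ)⁻¹ =
      n * ((n.choose k : ℕ) : ℝ)⁻¹ - if k = 0 then (n : ℝ) else 0 := by
  obtain ⟨m, rfl⟩ := Nat.exists_eq_add_one.2 hn
  rcases k with _ | k
  · simp
  · have h : ((m + 1 : ℕ) : ℝ) * (m.choose k : ℕ) =
        ((m + 1).choose (k + 1) : ℕ) * ((k + 1 : ℕ) : ℝ) := by
      exact_mod_cast Nat.add_one_mul_choose_eq m k
    have h₁ : ((m.choose k : ℕ) : ℝ) ≠ 0 := by
      exact_mod_cast (Nat.choose_pos (by omega)).ne'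
    have h₂ : (((m + 1).choose (k + 1) : ℕ) : ℝ) ≠ 0 := by
      exact_mod_cast (Nat.choose_pos hk).ne'
    simp only [Nat.add_sub_cancel, Nat.add_one_ne_zero, if_false, sub_zero]
    field_simp
    linarith

lemma sub_mul_inv_choose {n k : ℕ} (hn : 0 < n) (hk : k ≤ n) :
    ((n : ℝ) - k) * (((n - 1).choose k : ℕ) : ℝ)⁻¹ =
      n * ((n.choose k : ℕ) : ℝ)⁻¹ - if k = n then (n : ℝ) else 0 := by
  rcases hk.eq_or_lt with rfl | hlt
  · simp
  · have h := mul_inv_choose_pred hn (Nat.sub_le n k)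
    rw [Nat.choose_symm hk, Nat.cast_sub hk, if_neg (by omega),
      show n - k - 1 = n - 1 - k by omega, Nat.choose_symm (by omega)] at h
    rw [h, if_neg hlt.ne]

/-- Efficiency of the Shapley value of the game `f` on a nonempty set of players `A`. -/
lemma shapley_efficiency [DecidableEq α] {A : Finset α} (hA : A.Nonempty) (f : Finset α → ℝ) :
    ∑ z ∈ A, (1 / (A.card : ℝ)) * ∑ S ∈ (A.erase z).powerset,
      (((A.card - 1).choose S.card : ℕ) : ℝ)⁻¹ * (f (insert z S) - f S) = f A - f ∅ := by
  have hpos : 0 < A.card := hA.card_pos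
  have hcard : (A.card : ℝ) ≠ 0 := by exact_mod_cast hpos.ne'
  simp only [mul_sub, sum_sub_distrib]
  rw [← mul_sum, ← mul_sum,
    sum_erase_powerset_insert A (fun k => (((A.card - 1).choose k : ℕ) : ℝ)⁻¹) f,
    sum_erase_powerset, ← mul_sub, ← sum_sub_distrib]
  have key : ∀ S ∈ A.powerset,
      (S.card : ℝ) * (((A.card - 1).choose (S.card - 1) : ℕ) : ℝ)⁻¹ * f S -
        ((A.card : ℝ) - S.card) * ((((A.card - 1).choose S.card : ℕ) : ℝ)⁻¹ * f S) =
      (if S = A then A.card * f S else 0) - if S = ∅ then A.card * f S else 0 := by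
    intro S hS
    rw [mem_powerset] at hS
    have hle := card_le_card hS
    have hfull : S.card = A.card ↔ S = A :=
      ⟨fun h => eq_of_subset_of_card_le hS h.ge, fun h => h ▸ rfl⟩
    rw [← mul_assoc, mul_inv_choose_pred hpos hle, sub_mul_inv_choose hpos hle]
    simp only [card_eq_zero, hfull]
    split_ifs <;> ring
  rw [sum_congr rfl key, sum_sub_distrib, sum_ite_eq', sum_ite_eq']
  simp only [mem_powerset, Subset.refl, empty_subset, if_true]
  field_simp

/-- The ADS values within one group sum to the utility gained by adding that group. -/
lemma sum_ADS_group [DecidableEq α] (Dg : ℕ → Finset α) (v : Finset α → ℝ) {t : ℕ}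
    (ht : (Dg t).Nonempty) :
    ∑ z ∈ Dg t, ADS Dg v t z = v (prefixUnion Dg (t + 1)) - v (prefixUnion Dg t) := by
  have h := shapley_efficiency ht fun S => v (prefixUnion Dg t ∪ S)
  have hsucc : prefixUnion Dg (t + 1) = prefixUnion Dg t ∪ Dg t := by
    rw [prefixUnion, range_add_one, biUnion_insert, union_comm, prefixUnion]
  rw [union_empty, ← hsucc] at h
  rw [← h]
  refine sum_congr rfl fun z _ => ?_
  simp only [ADS, union_assoc, insert_eq, union_comm {z}]

/-- Total efficiency: the ADS values of all sources in the full training set `D`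
(each valued within its own group) sum to `v(D) − v(∅)`. -/
theorem ads_total_efficiency [DecidableEq α]
    (T : ℕ) (hT : 1 ≤ T) (Dg : ℕ → Finset α)
    (hdisj : ∀ i < T, ∀ j < T, i ≠ j → Disjoint (Dg i) (Dg j))
    (hne : ∀ j < T, (Dg j).Nonempty)
    (D : Finset α) (hD : D = (Finset.range T).biUnion Dg)
    (v : Finset α → ℝ) :
    ∑ t ∈ Finset.range T, ∑ z ∈ Dg t, ADS Dg v t z = v D - v ∅ := by
  rw [sum_congr rfl fun t ht => sum_ADS_group Dg v (hne t (mem_range.1 ht)),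
    sum_range_sub fun t => v (prefixUnion Dg t), hD]
  simp [prefixUnion]
end

section
/- (Symmetric valuation under redundant duplication) Suppose D is the disjoint union of finite sets D₁ and D₂ and f : D₁ → D₂ is a bijection such that for every z ∈ D₁ and every S ⊆ D \ {z, f(z)} one has v(S ∪ {z}) = v(S ∪ {f(z)}), and suppose moreover v(D) = v(D₁). Then φ(z; v, D) = φ(f(z); v, D) for every z ∈ D₁, and Σ_{z ∈ D₁} φ(z; v, D) = Σ_{z ∈ D₂} φ(z; v, D) = (1/2) · Σ_{z ∈ D} φ(z; v, D) = (1/2) · (v(D₁) − v(∅)). -/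
open Finset

variable {α : Type*}

/-- Data Shapley value (subset form) of a source `z` in the training set `D`. -/
noncomputable def DS [DecidableEq α] (D : Finset α) (v : Finset α → ℝ) (z : α) : ℝ :=
  (1 / D.card) *
    ∑ S ∈ (D.erase z).powerset,
      (((D.card - 1).choose S.card : ℝ))⁻¹ * (v (S ∪ {z}) - v S)

/-- Interchangeable sources have equal Data Shapley values. -/
theorem DS_eq_of_interchangeable [DecidableEq α] {D : Finset α} {v : Finset α → ℝ} {a b : α}
    (ha : a ∈ D) (hb : b ∈ D) (hab : a ≠ b)
    (h : ∀ S ⊆ D \ {a, b}, v (S ∪ {a}) = v (S ∪ {b})) :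
    DS D v a = DS D v b := by
  have hDa : D.erase a = insert b (D \ {a, b}) := by grind
  have hDb : D.erase b = insert a (D \ {a, b}) := by grind
  unfold DS
  rw [hDa, hDb, sum_powerset_insert (by simp), sum_powerset_insert (by simp)]
  congr 2
  · refine sum_congr rfl fun S hS => ?_
    rw [h S (mem_powerset.mp hS)]
  · refine sum_congr rfl fun S hS => ?_
    have hS := mem_powerset.mp hS
    have haS : a ∉ S := fun hx => by simpa using hS hx
    have hbS : b ∉ S := fun hx => by simpa using hS hx
    have hv := h S hS
    rw [card_insert_of_notMem haS, card_insert_of_notMem hbS]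
    have hcomm : insert b S ∪ {a} = insert a S ∪ {b} := by grind
    rw [hcomm, insert_eq b S, insert_eq a S, union_comm {b}, union_comm {a}, hv]

theorem sum_sum_powerset_erase [DecidableEq α] (D : Finset α) (g : Finset α → ℝ) :
    ∑ z ∈ D, ∑ S ∈ (D.erase z).powerset, g S =
      ∑ S ∈ D.powerset, ((#D - #S : ℕ) : ℝ) * g S := by
  rw [sum_comm' (s' := fun S => D \ S) (t' := D.powerset)]
  · refine sum_congr rfl fun S hS => ?_
    rw [sum_const, card_sdiff_of_subset (mem_powerset.mp hS), nsmul_eq_mul]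
  · intro z S
    simp only [mem_powerset, mem_sdiff]
    grind

theorem sum_sum_powerset_erase_union_singleton [DecidableEq α] (D : Finset α)
    (g : Finset α → ℝ) :
    ∑ z ∈ D, ∑ S ∈ (D.erase z).powerset, g (S ∪ {z}) =
      ∑ T ∈ D.powerset, (#T : ℝ) * g T := by
  have hinner : ∀ z ∈ D, ∑ S ∈ (D.erase z).powerset, g (S ∪ {z}) =
      ∑ T ∈ D.powerset with z ∈ T, g T := fun z hz => by
    refine sum_nbij' (fun S => S ∪ {z}) (fun T => T.erase z) ?_ ?_ ?_ ?_ ?_ <;>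
      simp only [mem_powerset, mem_filter] <;> grind
  rw [sum_congr rfl hinner, sum_comm' (s' := fun T => T) (t' := D.powerset)]
  · simp
  · intro z T
    simp only [mem_powerset, mem_filter]
    grind

theorem sub_mul_inv_choose_pred {n k : ℕ} (hk : k < n) :
    ((n - k : ℕ) : ℝ) * (((n - 1).choose k : ℝ))⁻¹ = n * ((n.choose k : ℝ))⁻¹ := by
  obtain ⟨m, rfl⟩ : ∃ m, n = m + 1 := ⟨n - 1, by omega⟩
  have h1 : (m.choose k : ℝ) ≠ 0 := by exact_mod_cast (Nat.choose_pos (by omega)).ne'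
  have h2 : ((m + 1).choose k : ℝ) ≠ 0 := by exact_mod_cast (Nat.choose_pos (by omega)).ne'
  have h : ((m.choose k * (m + 1) : ℕ) : ℝ) = ((m + 1).choose k * (m + 1 - k) : ℕ) := by
    rw [Nat.choose_mul_succ_eq]
  rw [Nat.cast_mul, Nat.cast_mul] at h
  rw [Nat.add_sub_cancel]
  field_simp
  linarith

theorem mul_inv_choose_pred_pred {n k : ℕ} (hk : 0 < k) (hkn : k ≤ n) :
    (k : ℝ) * (((n - 1).choose (k - 1) : ℝ))⁻¹ = n * ((n.choose k : ℝ))⁻¹ := by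
  have h := sub_mul_inv_choose_pred (n := n) (k := n - k) (by omega)
  rwa [Nat.sub_sub_self hkn, Nat.choose_symm hkn,
    Nat.choose_symm_of_eq_add (b := k - 1) (by omega)] at h

/-- Efficiency: the Data Shapley values add up to the utility gained by the whole set. -/
theorem sum_DS [DecidableEq α] {D : Finset α} (hD : D.Nonempty) (v : Finset α → ℝ) :
    ∑ z ∈ D, DS D v z = v D - v ∅ := by
  have hpos : (#D : ℝ) ≠ 0 := by exact_mod_cast hD.card_pos.ne'
  let e : Finset α → ℝ := fun T => #D * (((#D).choose #T : ℝ))⁻¹ * v T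
  have hlower : ∑ z ∈ D, ∑ S ∈ (D.erase z).powerset,
      (((#D - 1).choose #S : ℝ))⁻¹ * v S = ∑ T ∈ D.powerset, e T - #D * v D := by
    rw [sum_sum_powerset_erase D fun S => (((#D - 1).choose #S : ℝ))⁻¹ * v S,
      ← sum_erase_add _ _ (mem_powerset_self D), ← sum_erase_add _ e (mem_powerset_self D)]
    have hrest : ∀ T ∈ D.powerset.erase D,
        ((#D - #T : ℕ) : ℝ) * ((((#D - 1).choose #T : ℝ))⁻¹ * v T) = e T := fun T hT => by
      rw [mem_erase, mem_powerset] at hT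
      rw [← mul_assoc, sub_mul_inv_choose_pred (card_lt_card (hT.2.ssubset_of_ne hT.1))]
    rw [sum_congr rfl hrest]
    simp [e]
  have hupper : ∑ z ∈ D, ∑ S ∈ (D.erase z).powerset,
      (((#D - 1).choose #S : ℝ))⁻¹ * v (S ∪ {z}) = ∑ T ∈ D.powerset, e T - #D * v ∅ := by
    have hcard : ∀ z ∈ D, ∑ S ∈ (D.erase z).powerset,
        (((#D - 1).choose #S : ℝ))⁻¹ * v (S ∪ {z}) = ∑ S ∈ (D.erase z).powerset,
        (((#D - 1).choose (#(S ∪ {z}) - 1) : ℝ))⁻¹ * v (S ∪ {z}) := fun z _ => by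
      refine sum_congr rfl fun S hS => ?_
      have hzS : z ∉ S := fun hz => by simpa using mem_powerset.mp hS hz
      rw [card_union_of_disjoint (by simpa using hzS), card_singleton, Nat.add_sub_cancel]
    rw [sum_congr rfl hcard, sum_sum_powerset_erase_union_singleton D fun T =>
      (((#D - 1).choose (#T - 1) : ℝ))⁻¹ * v T,
      ← sum_erase_add _ _ (empty_mem_powerset D), ← sum_erase_add _ e (empty_mem_powerset D)]
    have hrest : ∀ T ∈ D.powerset.erase ∅,
        (#T : ℝ) * ((((#D - 1).choose (#T - 1) : ℝ))⁻¹ * v T) = e T := fun T hT => by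
      rw [mem_erase, mem_powerset] at hT
      rw [← mul_assoc, mul_inv_choose_pred_pred
        (card_pos.mpr (nonempty_iff_ne_empty.mpr hT.1)) (card_le_card hT.2)]
    rw [sum_congr rfl hrest]
    simp [e]
  simp only [DS, mul_sub, sum_sub_distrib, ← mul_sum]
  rw [hlower, hupper]
  field_simp
  ring

/-- Symmetric valuation under redundant duplication: if `D` is the disjoint union of
`D₁` and `D₂`, `f : D₁ → D₂` is a bijection with `v(S ∪ {z}) = v(S ∪ {f z})` for every
`z ∈ D₁` and `S ⊆ D \ {z, f z}`, and `v(D) = v(D₁)`, then each original source has the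
same Data Shapley value as its duplicate, and each half carries exactly half of the total
value `v(D₁) − v(∅)`. -/
theorem ds_redundant_duplication [DecidableEq α]
    (D D₁ D₂ : Finset α) (hD : D = D₁ ∪ D₂) (hdisj : Disjoint D₁ D₂)
    (n : ℕ) (hn : n = D.card) (hn1 : 1 ≤ n)
    (v : Finset α → ℝ)
    (f : α → α) (hbij : Set.BijOn f ↑D₁ ↑D₂)
    (hdup : ∀ z ∈ D₁, ∀ S ⊆ D \ {z, f z}, v (S ∪ {z}) = v (S ∪ {f z}))
    (hvD : v D = v D₁) :
    (∀ z ∈ D₁, DS D v z = DS D v (f z)) ∧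
      ∑ z ∈ D₁, DS D v z = ∑ z ∈ D₂, DS D v z ∧
      ∑ z ∈ D₁, DS D v z = (1 / 2) * ∑ z ∈ D, DS D v z ∧
      ∑ z ∈ D₁, DS D v z = (1 / 2) * (v D₁ - v ∅) := by
  have hfD : ∀ z ∈ D₁, f z ∈ D₂ := fun z hz => by exact_mod_cast hbij.mapsTo hz
  have hsymm : ∀ z ∈ D₁, DS D v z = DS D v (f z) := fun z hz =>
    DS_eq_of_interchangeable (hD ▸ mem_union_left _ hz) (hD ▸ mem_union_right _ (hfD z hz))
      (disjoint_iff_ne.mp hdisj z hz _ (hfD z hz)) (hdup z hz)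
  have hhalves : ∑ z ∈ D₁, DS D v z = ∑ z ∈ D₂, DS D v z :=
    sum_nbij f hfD hbij.injOn hbij.surjOn hsymm
  have htotal : ∑ z ∈ D, DS D v z = ∑ z ∈ D₁, DS D v z + ∑ z ∈ D₂, DS D v z := by
    rw [← sum_union hdisj, ← hD]
  have heff := sum_DS (card_pos.mp (by omega : 0 < #D)) v
  refine ⟨hsymm, hhalves, ?_, ?_⟩ <;> linarith
end
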